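/- arXiv:2112.04142 — 2 statements merged into one kernel-verified Lean document; each statement's English description precedes it below -/
import Mathlib

section
/- For all integers m ≥ 2 and n ≥ 1, χ_la(C_{2m} ∨ O_{2n−1}) = 3. -/
open Finset SimpleGraph
open scoped Classical

/-- The induced vertex label (weight) of `x`: the sum of `f` over all edges incident to `x`. -/
noncomputable def vertexWeight {V : Type*} [Fintype V] (G : SimpleGraph V)
    (f : Sym2 V → ℕ) (x : V) : ℕ :=
  ∑ e ∈ G.edgeFinset.filter (fun e => x ∈ e), f e

/-- `f` is a local antimagic labeling of `G`: it restricts to a bijection from the edge set of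
`G` onto `{1, …, q}` (where `q` is the number of edges), and adjacent vertices get distinct
induced vertex labels. -/
def IsLocalAntimagic {V : Type*} [Fintype V] (G : SimpleGraph V) (f : Sym2 V → ℕ) : Prop :=
  Set.BijOn f G.edgeSet (Set.Icc 1 G.edgeSet.ncard) ∧
  ∀ ⦃x y : V⦄, G.Adj x y → vertexWeight G f x ≠ vertexWeight G f y

/-- The number of distinct induced vertex labels, `c(f)`. -/
noncomputable def colorCount {V : Type*} [Fintype V] (G : SimpleGraph V)
    (f : Sym2 V → ℕ) : ℕ :=
  (Finset.univ.image (vertexWeight G f)).card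

/-- The local antimagic chromatic number `χ_la(G)`. -/
noncomputable def chiLA {V : Type*} [Fintype V] (G : SimpleGraph V) : ℕ :=
  sInf { n | ∃ f : Sym2 V → ℕ, IsLocalAntimagic G f ∧ colorCount G f = n }

/-- The join `G ∨ H` of two vertex-disjoint graphs. -/
def joinG {α β : Type*} (G : SimpleGraph α) (H : SimpleGraph β) : SimpleGraph (α ⊕ β) :=
  SimpleGraph.fromRel (fun x y =>
    (∃ a b, x = Sum.inl a ∧ y = Sum.inl b ∧ G.Adj a b) ∨
    (∃ a b, x = Sum.inr a ∧ y = Sum.inr b ∧ H.Adj a b) ∨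
    (∃ a b, x = Sum.inl a ∧ y = Sum.inr b))

structure Cent (m k : ℕ) (D w : ℤ) (x : ℕ → ℤ) (a : ℕ → ℕ → ℤ) : Prop where
  wpos : 0 < w
  wlt : w < D
  xr : ∀ j < 2 * m, x j % 2 = 1 ∧ -D < x j ∧ x j < D
  ar : ∀ i < k, ∀ j < 2 * m, a i j % 2 = 1 ∧ -D < a i j ∧ a i j < D
  xx : ∀ i < 2 * m, ∀ j < 2 * m, x i = x j → i = j
  xa : ∀ j < 2 * m, ∀ i < k, ∀ l < 2 * m, x j ≠ a i l
  aa : ∀ i < k, ∀ j < 2 * m, ∀ i' < k, ∀ j' < 2 * m, a i j = a i' j' → i = i' ∧ j = j'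
  row : ∀ i < k, ∑ j ∈ Finset.range (2 * m), a i j = 0
  col : ∀ j < 2 * m, x j + x (if j = 0 then 2 * m - 1 else j - 1) + ∑ i ∈ Finset.range k, a i j
    = if j % 2 = 0 then w else -w

lemma sum_pairs_zero (m : ℕ) (f : ℕ → ℤ) (h : ∀ i < m, f (2 * i) + f (2 * i + 1) = 0) :
    ∑ j ∈ Finset.range (2 * m), f j = 0 := by
  induction m with
  | zero => simp
  | succ m ih =>
    rw [show 2 * (m + 1) = 2 * m + 1 + 1 by ring, Finset.sum_range_succ, Finset.sum_range_succ,
      ih (fun i hi => h i (by omega))]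
    have := h m (by omega)
    omega

lemma cent_step {m k : ℕ} {D w : ℤ} {x : ℕ → ℤ} {a : ℕ → ℕ → ℤ} (hD : D % 2 = 0) (hm : 1 ≤ m)
    (h : Cent m k D w x a) :
    ∃ a', Cent m (k + 2) (D + 4 * m) (w + 2) x a' := by
  let u : ℕ → ℤ := fun j => if j % 2 = 0 then -(D + 2 * j + 1) else D + 2 * j - 1
  let v : ℕ → ℤ := fun j => if j % 2 = 0 then D + 2 * j + 3 else -(D + 2 * j + 1)
  let a' : ℕ → ℕ → ℤ := fun i j => if i < k then a i j else if i = k then u j else v j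
  have hcase : ∀ i < k + 2, ∀ j < 2 * m, (i < k ∧ a' i j = a i j) ∨
      (i = k ∧ j % 2 = 0 ∧ a' i j = -(D + 2 * j + 1)) ∨ (i = k ∧ j % 2 = 1 ∧ a' i j = D + 2 * j - 1) ∨
      (i = k + 1 ∧ j % 2 = 0 ∧ a' i j = D + 2 * j + 3) ∨
      (i = k + 1 ∧ j % 2 = 1 ∧ a' i j = -(D + 2 * j + 1)) := by
    intro i hi j hj
    simp only [a', u, v]
    split_ifs <;> omega
  have hDpos : 0 < D := h.wpos.trans h.wlt
  refine ⟨a', ?_, ?_, ?_, ?_, h.xx, ?_, ?_, ?_, ?_⟩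
  · have := h.wpos; omega
  · have := h.wlt; omega
  · intro j hj
    have := h.xr j hj
    omega
  · intro i hi j hj
    rcases hcase i hi j hj with ⟨h1, h2⟩ | h2 | h2 | h2 | h2
    · have := h.ar i h1 j hj
      omega
    all_goals omega
  · intro j hj i hi l hl
    have h0 := h.xr j hj
    rcases hcase i hi l hl with ⟨h1, h2⟩ | h2 | h2 | h2 | h2
    · have := h.xa j hj i h1 l hl
      omega
    all_goals omega
  · intro i hi j hj i' hi' j' hj' he
    rcases hcase i hi j hj with ⟨h1, h2⟩ | h2 | h2 | h2 | h2 <;>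
    rcases hcase i' hi' j' hj' with ⟨g1, g2⟩ | g2 | g2 | g2 | g2
    · exact h.aa i h1 j hj i' g1 j' hj' (by omega)
    all_goals first
      | omega
      | (have := h.ar i h1 j hj; omega)
      | (have := h.ar i' g1 j' hj'; omega)
  · intro i hi
    by_cases h1 : i < k
    · rw [← h.row i h1]
      apply Finset.sum_congr rfl
      intro j _
      simp [a', h1]
    · apply sum_pairs_zero
      intro j hj
      have := hcase i hi (2 * j) (by omega)
      have := hcase i hi (2 * j + 1) (by omega)
      push_cast at *
      omega
  · intro j hj
    have h0 := h.col j hj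
    have h1 : ∑ i ∈ Finset.range k, a' i j = ∑ i ∈ Finset.range k, a i j := by
      apply Finset.sum_congr rfl
      intro i hi
      simp [a', Finset.mem_range.mp hi]
    rw [Finset.sum_range_succ, Finset.sum_range_succ, h1]
    have := hcase k (by omega) j hj
    have := hcase (k + 1) (by omega) j hj
    split_ifs at h0 ⊢ <;> omega

lemma cent_base (m : ℕ) (hm : 1 ≤ m) (L : ℕ → ℕ → ℤ) (A B : ℤ) (hAB : A + B = 12 * m + 3)
    (hw : 0 < 2 * A - 3 * (4 * m + 1)) (hw2 : 2 * A - 3 * (4 * m + 1) < 4 * m)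
    (hq : ∀ i < m, L 1 (if i = 0 then m - 1 else i - 1) + L 0 i + L 2 i = A)
    (hp : ∀ i < m, L 0 i + L 1 i + L 3 i = B)
    (hr : ∀ c < 4, ∀ i < m, 1 ≤ L c i ∧ L c i ≤ 4 * m)
    (hinj : ∀ c < 4, ∀ c' < 4, ∀ i < m, ∀ i' < m, L c i = L c' i' → c = c' ∧ i = i') :
    ∃ x a, Cent m 1 (4 * m) (2 * A - 3 * (4 * m + 1)) x a := by
  let x : ℕ → ℤ := fun j => 2 * L (j % 2) (j / 2) - (4 * m + 1)
  let a : ℕ → ℕ → ℤ := fun _ j => 2 * L (2 + j % 2) (j / 2) - (4 * m + 1)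
  have hcol : ∀ j < 2 * m, x j + x (if j = 0 then 2 * m - 1 else j - 1) + a 0 j
      = if j % 2 = 0 then 2 * A - 3 * (4 * m + 1) else -(2 * A - 3 * (4 * m + 1)) := by
    intro j hj
    rcases Nat.even_or_odd' j with ⟨i, rfl | rfl⟩
    · have h1 := hq i (by omega)
      have e1 : (if 2 * i = 0 then 2 * m - 1 else 2 * i - 1) % 2 = 1 := by split_ifs <;> omega
      have e2 : (if 2 * i = 0 then 2 * m - 1 else 2 * i - 1) / 2 = if i = 0 then m - 1 else i - 1 := by
        split_ifs <;> omega
      simp only [x, a, e1, e2, show 2 * i % 2 = 0 by omega, show 2 * i / 2 = i by omega, if_true]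
      linarith
    · have h1 := hp i (by omega)
      simp only [x, a, show (2 * i + 1) % 2 = 1 by omega, show (2 * i + 1) / 2 = i by omega,
        show ¬ (2 * i + 1 = 0) by omega, if_false, show 2 * i + 1 - 1 = 2 * i by omega,
        show 2 * i % 2 = 0 by omega, show 2 * i / 2 = i by omega, one_ne_zero]
      linarith
  have hrow : ∑ j ∈ Finset.range (2 * m), a 0 j = 0 := by
    -- total
    have htot : ∑ j ∈ Finset.range (2 * m), x j + ∑ j ∈ Finset.range (2 * m), a 0 j = 0 := by
      let g : ℕ → ℤ := fun j => L (j % 4) (j / 4)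
      have hg : ∑ j ∈ Finset.range (4 * m), (2 * g j - (4 * m + 1)) = 0 := by
        have hin : Set.InjOn g (Finset.range (4 * m)) := by
          intro j hj j' hj' he
          simp only [Finset.coe_range, Set.mem_Iio] at hj hj'
          have := hinj _ (by omega) _ (by omega) _ (by omega) _ (by omega) he
          omega
        have him : (Finset.range (4 * m)).image g = Finset.Icc (1 : ℤ) (4 * m) := by
          apply Finset.eq_of_subset_of_card_le
          · intro y hy
            obtain ⟨j, hj, rfl⟩ := Finset.mem_image.mp hy
            have hj := Finset.mem_range.mp hj
            exact Finset.mem_Icc.mpr (hr _ (by omega) _ (by omega))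
          · rw [Finset.card_image_of_injOn hin]
            simp
        rw [← Finset.sum_image (f := fun y : ℤ => 2 * y - (4 * m + 1)) hin, him]
        apply Finset.sum_involution (fun y _ => 4 * (m : ℤ) + 1 - y)
        · intro y _; ring
        · intro y _ _ h; omega
        · intro y hy; simp only [Finset.mem_Icc] at hy ⊢; omega
        · intro y _; ring
      rw [← hg]
      have : ∀ t, ∑ j ∈ Finset.range (2 * t), x j + ∑ j ∈ Finset.range (2 * t), a 0 j
          = ∑ j ∈ Finset.range (4 * t), (2 * g j - (4 * m + 1)) := by
        intro t
        induction t with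
        | zero => simp
        | succ t ih =>
          rw [show 2 * (t + 1) = 2 * t + 1 + 1 by ring, show 4 * (t + 1) = 4 * t + 1 + 1 + 1 + 1 by ring]
          simp only [Finset.sum_range_succ]
          rw [← ih]
          simp only [x, a, g, show 2 * t % 2 = 0 by omega, show 2 * t / 2 = t by omega,
            show (2 * t + 1) % 2 = 1 by omega, show (2 * t + 1) / 2 = t by omega,
            show 4 * t % 4 = 0 by omega, show 4 * t / 4 = t by omega,
            show (4 * t + 1) % 4 = 1 by omega, show (4 * t + 1) / 4 = t by omega,
            show (4 * t + 1 + 1) % 4 = 2 by omega, show (4 * t + 1 + 1) / 4 = t by omega,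
            show (4 * t + 1 + 1 + 1) % 4 = 3 by omega, show (4 * t + 1 + 1 + 1) / 4 = t by omega]
          ring
      exact this m
    have hc : ∑ j ∈ Finset.range (2 * m), (x j + x (if j = 0 then 2 * m - 1 else j - 1) + a 0 j) = 0 := by
      apply sum_pairs_zero
      intro i hi
      rw [hcol _ (by omega), hcol _ (by omega)]
      rw [if_pos (by omega), if_neg (by omega)]
      ring
    rw [Finset.sum_add_distrib, Finset.sum_add_distrib] at hc
    have hsh : ∑ j ∈ Finset.range (2 * m), x (if j = 0 then 2 * m - 1 else j - 1)
        = ∑ j ∈ Finset.range (2 * m), x j := by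
      obtain ⟨t, ht⟩ : ∃ t, 2 * m = t + 1 := ⟨2 * m - 1, by omega⟩
      rw [ht, Finset.sum_range_succ', Finset.sum_range_succ]
      simp
    rw [hsh] at hc
    linarith
  refine ⟨x, a, hw, hw2, ?_, ?_, ?_, ?_, ?_, ?_, ?_⟩
  · intro j hj
    have := hr (j % 2) (by omega) (j / 2) (by omega)
    simp only [x]; omega
  · intro i _ j hj
    have := hr (2 + j % 2) (by omega) (j / 2) (by omega)
    simp only [a]; omega
  · intro i hi j hj he
    have := hinj (i % 2) (by omega) (j % 2) (by omega) (i / 2) (by omega) (j / 2) (by omega)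
      (by simp only [x] at he; omega)
    omega
  · intro j hj i _ l hl he
    have := hinj (j % 2) (by omega) (2 + l % 2) (by omega) (j / 2) (by omega) (l / 2) (by omega)
      (by simp only [x, a] at he; omega)
    omega
  · intro i hi j hj i' hi' j' hj' he
    have := hinj (2 + j % 2) (by omega) (2 + j' % 2) (by omega) (j / 2) (by omega) (j' / 2) (by omega)
      (by simp only [a] at he; omega)
    omega
  · intro i hi
    obtain rfl : i = 0 := by omega
    exact hrow
  · intro j hj
    simpa using hcol j hj

/-- Helper: injectivity of a four-family labelling from pairwise conditions. -/
lemma inj_four (m : ℕ) (L : ℕ → ℕ → ℤ)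
    (h : ∀ c < 4, ∀ i < m, ∀ i' < m, L c i = L c i' → i = i')
    (h' : ∀ c < 4, ∀ c' < c, ∀ i < m, ∀ i' < m, L c i ≠ L c' i') :
    ∀ c < 4, ∀ c' < 4, ∀ i < m, ∀ i' < m, L c i = L c' i' → c = c' ∧ i = i' := by
  intro c hc c' hc' i hi i' hi' he
  rcases lt_trichotomy c c' with hlt | rfl | hlt
  · exact absurd he.symm (h' c' hc' c hlt i' hi' i hi)
  · exact ⟨rfl, h c hc i hi i' hi' he⟩
  · exact absurd he (h' c hc c' hlt i hi i' hi')

def mk4 (e o q p : ℕ → ℤ) : ℕ → ℕ → ℤ := fun c i =>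
  if c = 0 then e i else if c = 1 then o i else if c = 2 then q i else p i

/-- Disjunctive descriptions of the families suffice. -/
lemma cent_fam (m : ℕ) (hm : 1 ≤ m) (e o q p : ℕ → ℤ) (A B : ℤ) (hAB : A + B = 12 * m + 3)
    (hw : 0 < 2 * A - 3 * (4 * m + 1)) (hw2 : 2 * A - 3 * (4 * m + 1) < 4 * m)
    (hq : ∀ i < m, o (if i = 0 then m - 1 else i - 1) + e i + q i = A)
    (hp : ∀ i < m, e i + o i + p i = B)
    (re : ∀ i < m, 1 ≤ e i ∧ e i ≤ 4 * m) (ro : ∀ i < m, 1 ≤ o i ∧ o i ≤ 4 * m)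
    (rq : ∀ i < m, 1 ≤ q i ∧ q i ≤ 4 * m) (rp : ∀ i < m, 1 ≤ p i ∧ p i ≤ 4 * m)
    (ee : ∀ i < m, ∀ j < m, e i = e j → i = j) (oo : ∀ i < m, ∀ j < m, o i = o j → i = j)
    (qq : ∀ i < m, ∀ j < m, q i = q j → i = j) (pp : ∀ i < m, ∀ j < m, p i = p j → i = j)
    (oe : ∀ i < m, ∀ j < m, o i ≠ e j) (qe : ∀ i < m, ∀ j < m, q i ≠ e j)
    (qo : ∀ i < m, ∀ j < m, q i ≠ o j) (pe : ∀ i < m, ∀ j < m, p i ≠ e j)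
    (po : ∀ i < m, ∀ j < m, p i ≠ o j) (pq : ∀ i < m, ∀ j < m, p i ≠ q j) :
    ∃ x a w, Cent m 1 (4 * m) w x a := by
  obtain ⟨x, a, h⟩ := cent_base m hm (mk4 e o q p) A B hAB hw hw2
    (by simpa [mk4] using hq) (by simpa [mk4] using hp)
    (by intro c hc; interval_cases c <;> simpa [mk4])
    (by
      apply inj_four
      · intro c hc; interval_cases c <;> simpa [mk4]
      · intro c hc c' hc'
        interval_cases c <;> interval_cases c' <;> simpa [mk4])
  exact ⟨x, a, _, h⟩

lemma cent_two_mod (t : ℕ) (ht : 1 ≤ t) : ∃ x a w, Cent (4 * t + 2) 1 (4 * (4 * t + 2 : ℕ)) w x a := by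
  let e : ℕ → ℤ := fun i => if i < 2 * t then 2 * i + 1 else if i = 2 * t then 4 * t + 3
    else if i = 2 * t + 1 then 4 * t + 1 else 2 * (4 * t + 2 - i)
  let o : ℕ → ℤ := fun i => if i < 2 * t then 12 * t + 9 + 2 * i else 16 * t + 8 - 2 * (i - 2 * t)
  let A : ℤ := 24 * t + 14
  let B : ℤ := 24 * t + 13
  let p : ℕ → ℤ := fun i => B - e i - o i
  let q : ℕ → ℤ := fun i => A - o (if i = 0 then 4 * t + 2 - 1 else i - 1) - e i
  have He : ∀ i < 4 * t + 2, (i < 2 * t ∧ e i = 2 * i + 1) ∨ (i = 2 * t ∧ e i = 4 * t + 3) ∨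
      (i = 2 * t + 1 ∧ e i = 4 * t + 1) ∨ (2 * t + 1 < i ∧ e i = 2 * (4 * t + 2 - i)) := by
    intro i hi; simp only [e]; split_ifs <;> omega
  have Ho : ∀ i < 4 * t + 2, (i < 2 * t ∧ o i = 12 * t + 9 + 2 * i) ∨
      (2 * t ≤ i ∧ o i = 16 * t + 8 - 2 * (i - 2 * t)) := by
    intro i hi; simp only [o]; split_ifs <;> omega
  have Hp : ∀ i < 4 * t + 2, (i < 2 * t ∧ p i = 12 * t + 3 - 4 * i) ∨ (i = 2 * t ∧ p i = 4 * t + 2) ∨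
      (i = 2 * t + 1 ∧ p i = 4 * t + 6) ∨ (2 * t + 1 < i ∧ p i = 4 * i - 4 * t + 1) := by
    intro i hi
    have h1 := He i hi
    have h2 := Ho i hi
    simp only [p, B]; omega
  have Hq : ∀ i < 4 * t + 2, (i = 0 ∧ q i = 12 * t + 7) ∨
      (0 < i ∧ i < 2 * t ∧ q i = 12 * t + 6 - 4 * i) ∨ (i = 2 * t ∧ q i = 4 * t + 4) ∨
      (i = 2 * t + 1 ∧ q i = 4 * t + 5) ∨ (2 * t + 1 < i ∧ q i = 4 * i - 4 * t) := by
    intro i hi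
    have h1 := He i hi
    have h2 := Ho (if i = 0 then 4 * t + 2 - 1 else i - 1) (by split_ifs <;> omega)
    simp only [q, A]; split_ifs at h2 ⊢ <;> omega
  apply cent_fam (4 * t + 2) (by omega) e o q p A B
  · simp only [A, B]; push_cast; ring
  · simp only [A]; push_cast; omega
  · simp only [A]; push_cast; omega
  · intro i _; simp only [q]; ring
  · intro i _; simp only [p]; ring
  · intro i hi; have := He i hi; omega
  · intro i hi; have := Ho i hi; omega
  · intro i hi; have := Hq i hi; omega
  · intro i hi; have := Hp i hi; omega
  · intro i hi j hj; have := He i hi; have := He j hj; omega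
  · intro i hi j hj; have := Ho i hi; have := Ho j hj; omega
  · intro i hi j hj; have := Hq i hi; have := Hq j hj; omega
  · intro i hi j hj; have := Hp i hi; have := Hp j hj; omega
  · intro i hi j hj; have := Ho i hi; have := He j hj; omega
  · intro i hi j hj; have := Hq i hi; have := He j hj; omega
  · intro i hi j hj; have := Hq i hi; have := Ho j hj; omega
  · intro i hi j hj; have := Hp i hi; have := He j hj; omega
  · intro i hi j hj; have := Hp i hi; have := Ho j hj; omega
  · intro i hi j hj; have := Hp i hi; have := Hq j hj; omega

set_option maxHeartbeats 4000000 in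
lemma cent_zero_mod (t : ℕ) (ht : 1 ≤ t) : ∃ x a w, Cent (4 * t) 1 (4 * (4 * t : ℕ)) w x a := by
  let e : ℕ → ℤ := fun i => 16 * t + 1 - (if i < 2 * t - 1 then 2 * i + 1 else if i = 2 * t - 1 then 4 * t
    else if i = 2 * t then 4 * t - 1 else 2 * (4 * t - i))
  let o : ℕ → ℤ := fun i => 16 * t + 1 - (if i < 2 * t - 1 then 12 * t + 3 + 2 * i
    else if i = 2 * t - 1 then 16 * t - 2 else if i = 2 * t then 16 * t
    else if i = 4 * t - 1 then 12 * t + 1 else 12 * t + 2 * (4 * t - 1 - i))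
  let A : ℤ := 24 * t + 3
  let B : ℤ := 24 * t
  let p : ℕ → ℤ := fun i => B - e i - o i
  let q : ℕ → ℤ := fun i => A - o (if i = 0 then 4 * t - 1 else i - 1) - e i
  have He : ∀ i < 4 * t, (i < 2 * t - 1 ∧ e i = 16 * t - 2 * i) ∨ (i = 2 * t - 1 ∧ e i = 12 * t + 1) ∨
      (i = 2 * t ∧ e i = 12 * t + 2) ∨ (2 * t < i ∧ e i = 8 * t + 1 + 2 * i) := by
    intro i hi; simp only [e]; split_ifs <;> omega
  have Ho : ∀ i < 4 * t, (i < 2 * t - 1 ∧ o i = 4 * t - 2 - 2 * i) ∨ (i = 2 * t - 1 ∧ o i = 3) ∨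
      (i = 2 * t ∧ o i = 1) ∨ (2 * t < i ∧ i < 4 * t - 1 ∧ o i = 2 * i - 4 * t + 3) ∨
      (i = 4 * t - 1 ∧ o i = 4 * t) := by
    intro i hi; simp only [o]; split_ifs <;> omega
  have Hp : ∀ i < 4 * t, (i < 2 * t - 1 ∧ p i = 4 * t + 2 + 4 * i) ∨
      (i = 2 * t - 1 ∧ p i = 12 * t - 4) ∨
      (i = 2 * t ∧ p i = 12 * t - 3) ∨ (2 * t < i ∧ i < 4 * t - 1 ∧ p i = 20 * t - 4 * i - 4) ∨
      (i = 4 * t - 1 ∧ p i = 4 * t + 1) := by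
    intro i hi
    have h1 := He i hi
    have h2 := Ho i hi
    simp only [p, B]; omega
  have Hq : ∀ i < 4 * t, (i = 0 ∧ i < 2 * t - 1 ∧ q i = 4 * t + 3) ∨
      (0 < i ∧ i < 2 * t - 1 ∧ q i = 4 * t + 3 + 4 * i) ∨
      (i = 2 * t - 1 ∧ q i = 12 * t) ∨
      (i = 2 * t ∧ q i = 12 * t - 2) ∨ (i = 2 * t + 1 ∧ q i = 12 * t - 1) ∨
      (2 * t + 1 < i ∧ q i = 20 * t + 1 - 4 * i) := by
    intro i hi
    have h1 := He i hi
    have h2 := Ho (if i = 0 then 4 * t - 1 else i - 1) (by split_ifs <;> omega)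
    simp only [q, A]; split_ifs at h2 ⊢ <;> omega
  apply cent_fam (4 * t) (by omega) e o q p A B
  · simp only [A, B]; push_cast; ring
  · simp only [A]; push_cast; omega
  · simp only [A]; push_cast; omega
  · intro i _; simp only [q]; ring
  · intro i _; simp only [p]; ring
  · intro i hi; have := He i hi; omega
  · intro i hi; have := Ho i hi; omega
  · intro i hi; have := Hq i hi; omega
  · intro i hi; have := Hp i hi; omega
  · intro i hi j hj; have := He i hi; have := He j hj; omega
  · intro i hi j hj; have := Ho i hi; have := Ho j hj; omega
  · intro i hi j hj; have := Hq i hi; have := Hq j hj; omega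
  · intro i hi j hj; have := Hp i hi; have := Hp j hj; omega
  · intro i hi j hj; have := Ho i hi; have := He j hj; omega
  · intro i hi j hj; have := Hq i hi; have := He j hj; omega
  · intro i hi j hj; have := Hq i hi; have := Ho j hj; omega
  · intro i hi j hj; have := Hp i hi; have := He j hj; omega
  · intro i hi j hj; have := Hp i hi; have := Ho j hj; omega
  · intro i hi j hj; have := Hp i hi; have := Hq j hj; omega

lemma cent_odd (t : ℕ) (ht : 1 ≤ t) : ∃ x a w, Cent (2 * t + 1) 1 (4 * (2 * t + 1 : ℕ)) w x a := by
  let e : ℕ → ℤ := fun i => i + 1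
  let o : ℕ → ℤ := fun i => if i < t then 7 * t + 5 + i else 5 * t + 4 + i
  let A : ℤ := 13 * t + 8
  let B : ℤ := 11 * t + 7
  let p : ℕ → ℤ := fun i => B - e i - o i
  let q : ℕ → ℤ := fun i => A - o (if i = 0 then 2 * t + 1 - 1 else i - 1) - e i
  have He : ∀ i < 2 * t + 1, e i = i + 1 := by
    intro i hi; simp only [e]
  have Ho : ∀ i < 2 * t + 1, (i < t ∧ o i = 7 * t + 5 + i) ∨ (t ≤ i ∧ o i = 5 * t + 4 + i) := by
    intro i hi; simp only [o]; split_ifs <;> omega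
  have Hp : ∀ i < 2 * t + 1, (i < t ∧ p i = 4 * t + 1 - 2 * i) ∨ (t ≤ i ∧ p i = 6 * t + 2 - 2 * i) := by
    intro i hi
    have h1 := He i hi
    have h2 := Ho i hi
    simp only [p, B]; omega
  have Hq : ∀ i < 2 * t + 1, (i ≤ t ∧ q i = 6 * t + 3 - 2 * i) ∨ (t < i ∧ q i = 8 * t + 4 - 2 * i) := by
    intro i hi
    have h1 := He i hi
    have h2 := Ho (if i = 0 then 2 * t + 1 - 1 else i - 1) (by split_ifs <;> omega)
    simp only [q, A]; split_ifs at h2 ⊢ <;> omega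
  apply cent_fam (2 * t + 1) (by omega) e o q p A B
  · simp only [A, B]; push_cast; ring
  · simp only [A]; push_cast; omega
  · simp only [A]; push_cast; omega
  · intro i _; simp only [q]; ring
  · intro i _; simp only [p]; ring
  · intro i hi; have := He i hi; omega
  · intro i hi; have := Ho i hi; omega
  · intro i hi; have := Hq i hi; omega
  · intro i hi; have := Hp i hi; omega
  · intro i hi j hj; have := He i hi; have := He j hj; omega
  · intro i hi j hj; have := Ho i hi; have := Ho j hj; omega
  · intro i hi j hj; have := Hq i hi; have := Hq j hj; omega
  · intro i hi j hj; have := Hp i hi; have := Hp j hj; omega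
  · intro i hi j hj; have := Ho i hi; have := He j hj; omega
  · intro i hi j hj; have := Hq i hi; have := He j hj; omega
  · intro i hi j hj; have := Hq i hi; have := Ho j hj; omega
  · intro i hi j hj; have := Hp i hi; have := He j hj; omega
  · intro i hi j hj; have := Hp i hi; have := Ho j hj; omega
  · intro i hi j hj; have := Hp i hi; have := Hq j hj; omega

structure LData (N k : ℕ) (A B C : ℕ) (x : ℕ → ℕ) (a : ℕ → ℕ → ℕ) : Prop where
  ev : N % 2 = 0
  xr : ∀ j < N, 1 ≤ x j ∧ x j ≤ N * (k + 1)
  ar : ∀ i < k, ∀ j < N, 1 ≤ a i j ∧ a i j ≤ N * (k + 1)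
  xx : ∀ i < N, ∀ j < N, x i = x j → i = j
  xa : ∀ j < N, ∀ i < k, ∀ l < N, x j ≠ a i l
  aa : ∀ i < k, ∀ j < N, ∀ i' < k, ∀ j' < N, a i j = a i' j' → i = i' ∧ j = j'
  row : ∀ i < k, ∑ j ∈ Finset.range N, a i j = C
  col : ∀ j < N, x j + x (if j = 0 then N - 1 else j - 1) + ∑ i ∈ Finset.range k, a i j
    = if j % 2 = 0 then A else B
  ab : A ≠ B
  ac : A ≠ C
  bc : B ≠ C

def nxt (N : ℕ) (j : Fin N) : Fin N :=
  ⟨if j.val + 1 = N then 0 else j.val + 1, by have := j.isLt; split_ifs <;> omega⟩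

def prv (N : ℕ) (j : Fin N) : Fin N :=
  ⟨if j.val = 0 then N - 1 else j.val - 1, by have := j.isLt; split_ifs <;> omega⟩

lemma nxt_val (N : ℕ) (j : Fin N) : (j.val + 1 = N ∧ (nxt N j).val = 0) ∨
    (j.val + 1 < N ∧ (nxt N j).val = j.val + 1) := by
  have := j.isLt
  simp only [nxt]; split_ifs <;> omega

lemma prv_val (N : ℕ) (j : Fin N) : (j.val = 0 ∧ (prv N j).val + 1 = N) ∨
    (0 < j.val ∧ (prv N j).val + 1 = j.val) := by
  have := j.isLt
  simp only [prv]; split_ifs <;> omega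

lemma eq_nxt_iff (N : ℕ) (j l : Fin N) : j = nxt N l ↔ l = prv N j := by
  have := nxt_val N l
  have := prv_val N j
  have := j.isLt
  have := l.isLt
  rw [Fin.ext_iff, Fin.ext_iff]
  omega

lemma sub_one_iff (N : ℕ) (hN : 2 ≤ N) (u v : Fin N) : (u - v).val = 1 ↔ u = nxt N v := by
  have h1 := nxt_val N v
  have hu := u.isLt
  have hv := v.isLt
  rw [Fin.ext_iff, Fin.sub_def]
  simp only
  by_cases h : v.val ≤ u.val
  · rw [show N - v.val + u.val = (u.val - v.val) + N by omega, Nat.add_mod_right,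
      Nat.mod_eq_of_lt (by omega)]
    omega
  · rw [Nat.mod_eq_of_lt (by omega)]
    omega

lemma cyc_adj (N : ℕ) (hN : 2 ≤ N) (u v : Fin N) :
    (cycleGraph N).Adj u v ↔ u = nxt N v ∨ v = nxt N u := by
  rw [cycleGraph_adj', sub_one_iff N hN, sub_one_iff N hN]

lemma join_ll {α β : Type*} (G : SimpleGraph α) (H : SimpleGraph β) (a b : α) :
    (joinG G H).Adj (Sum.inl a) (Sum.inl b) ↔ G.Adj a b := by
  simp only [joinG, fromRel_adj]
  constructor
  · rintro ⟨_, (⟨c, d, h1, h2, h3⟩ | ⟨c, d, h1, _⟩ | ⟨c, d, h1, h2⟩) |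
      (⟨c, d, h1, h2, h3⟩ | ⟨c, d, h1, _⟩ | ⟨c, d, h1, h2⟩)⟩ <;> simp_all [G.adj_comm]
  · intro h
    exact ⟨by simpa using h.ne, Or.inl (Or.inl ⟨a, b, rfl, rfl, h⟩)⟩

lemma join_lr {α β : Type*} (G : SimpleGraph α) (H : SimpleGraph β) (a : α) (b : β) :
    (joinG G H).Adj (Sum.inl a) (Sum.inr b) := by
  simp only [joinG, fromRel_adj]
  exact ⟨by simp, Or.inl (Or.inr (Or.inr ⟨a, b, rfl, rfl⟩))⟩

lemma join_rr {α β : Type*} (G : SimpleGraph α) (a b : β) :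
    ¬ (joinG G (⊥ : SimpleGraph β)).Adj (Sum.inr a) (Sum.inr b) := by
  simp [joinG, fromRel_adj]

/-- The edges of the join, indexed. -/
def edg (N k : ℕ) : Fin N ⊕ (Fin k × Fin N) → Sym2 (Fin N ⊕ Fin k)
  | Sum.inl j => s(Sum.inl j, Sum.inl (nxt N j))
  | Sum.inr p => s(Sum.inl p.2, Sum.inr p.1)

lemma edg_inj (N k : ℕ) (hN : 4 ≤ N) : Function.Injective (edg N k) := by
  rintro (j | ⟨i, j⟩) (j' | ⟨i', j'⟩) h
  · have h1 := nxt_val N j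
    have h2 := nxt_val N j'
    simp only [edg, Sym2.eq_iff, Sum.inl.injEq] at h
    congr 1
    rcases h with h | h
    · exact h.1
    · obtain ⟨h3, h4⟩ := h
      rw [Fin.ext_iff] at h3 h4 ⊢
      omega
  · simp [edg] at h
  · simp [edg] at h
  · simp [edg] at h
    simp [h]

lemma edg_range (N k : ℕ) (hN : 4 ≤ N) :
    Set.range (edg N k) = (joinG (cycleGraph N) (⊥ : SimpleGraph (Fin k))).edgeSet := by
  ext e
  constructor
  · rintro ⟨(j | ⟨i, j⟩), rfl⟩
    · simp only [edg, mem_edgeSet, join_ll]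
      rw [cyc_adj N (by omega)]
      simp
    · simp only [edg, mem_edgeSet]
      apply join_lr
  · induction e using Sym2.ind with
    | _ u v =>
      intro h
      rw [mem_edgeSet] at h
      rcases u with u | u <;> rcases v with v | v
      · rw [join_ll, cyc_adj N (by omega)] at h
        rcases h with h | h
        · exact ⟨Sum.inl v, by simp [edg, h]⟩
        · exact ⟨Sum.inl u, by simp [edg, h]⟩
      · exact ⟨Sum.inr (v, u), rfl⟩
      · exact ⟨Sum.inr (u, v), by simp [edg]⟩
      · exact absurd h (join_rr _ _ _)

lemma chi_lower (N k : ℕ) (hN : 4 ≤ N) (hk : 1 ≤ k) (f : Sym2 (Fin N ⊕ Fin k) → ℕ)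
    (h : IsLocalAntimagic (joinG (cycleGraph N) (⊥ : SimpleGraph (Fin k))) f) :
    3 ≤ colorCount (joinG (cycleGraph N) (⊥ : SimpleGraph (Fin k))) f := by
  set G := joinG (cycleGraph N) (⊥ : SimpleGraph (Fin k))
  let v0 : Fin N := ⟨0, by omega⟩
  let u0 : Fin k := ⟨0, by omega⟩
  have h1 : G.Adj (Sum.inl v0) (Sum.inl (nxt N v0)) := by
    rw [join_ll, cyc_adj N (by omega)]; simp
  have h2 : G.Adj (Sum.inl v0) (Sum.inr u0) := join_lr _ _ _ _
  have h3 : G.Adj (Sum.inl (nxt N v0)) (Sum.inr u0) := join_lr _ _ _ _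
  have e1 := h.2 h1
  have e2 := h.2 h2
  have e3 := h.2 h3
  unfold colorCount
  rw [← Finset.card_eq_three.mpr ⟨_, _, _, e1, e2, e3, rfl⟩]
  apply Finset.card_le_card
  intro y hy
  simp only [Finset.mem_insert, Finset.mem_singleton] at hy
  rcases hy with rfl | rfl | rfl <;> exact Finset.mem_image_of_mem _ (Finset.mem_univ _)

lemma chi_of_data (N k A B C : ℕ) (x : ℕ → ℕ) (a : ℕ → ℕ → ℕ) (hN : 4 ≤ N) (hk : 1 ≤ k)
    (h : LData N k A B C x a) :
    chiLA (joinG (cycleGraph N) (⊥ : SimpleGraph (Fin k))) = 3 := by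
  set G := joinG (cycleGraph N) (⊥ : SimpleGraph (Fin k)) with hG
  let L : Fin N ⊕ (Fin k × Fin N) → ℕ := Sum.elim (fun j => x j) (fun p => a p.1 p.2)
  let f : Sym2 (Fin N ⊕ Fin k) → ℕ := Function.extend (edg N k) L 0
  have hinj := edg_inj N k hN
  have hrange : Set.range (edg N k) = G.edgeSet := edg_range N k hN
  have hf : ∀ i, f (edg N k i) = L i := fun i => hinj.extend_apply L 0 i
  have hLinj : Function.Injective L := by
    rintro (j | ⟨i, j⟩) (j' | ⟨i', j'⟩) he
    · exact congrArg _ (Fin.ext (h.xx _ j.isLt _ j'.isLt he))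
    · exact absurd he (h.xa _ j.isLt _ i'.isLt _ j'.isLt)
    · exact absurd he.symm (h.xa _ j'.isLt _ i.isLt _ j.isLt)
    · have := h.aa _ i.isLt _ j.isLt _ i'.isLt _ j'.isLt he
      rw [Fin.ext this.1, Fin.ext this.2]
  have hcard : G.edgeSet.ncard = N * (k + 1) := by
    rw [← hrange, ← Set.image_univ, Set.ncard_image_of_injective _ hinj, Set.ncard_univ]
    simp only [Nat.card_eq_fintype_card, Fintype.card_sum, Fintype.card_prod, Fintype.card_fin]
    ring
  have hLr : ∀ i, L i ∈ Finset.Icc 1 (N * (k + 1)) := by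
    rintro (j | ⟨i, j⟩)
    · exact Finset.mem_Icc.mpr (h.xr _ j.isLt)
    · exact Finset.mem_Icc.mpr (h.ar _ i.isLt _ j.isLt)
  have hLim : Finset.univ.image L = Finset.Icc 1 (N * (k + 1)) := by
    apply Finset.eq_of_subset_of_card_le
    · intro y hy
      obtain ⟨i, _, rfl⟩ := Finset.mem_image.mp hy
      exact hLr i
    · rw [Finset.card_image_of_injective _ hLinj]
      simp only [Nat.card_Icc, Finset.card_univ, Fintype.card_sum, Fintype.card_prod, Fintype.card_fin]
      apply le_of_eq
      rw [Nat.add_sub_cancel]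
      ring
  have hbij : Set.BijOn f G.edgeSet (Set.Icc 1 G.edgeSet.ncard) := by
    rw [hcard, ← hrange]
    refine ⟨?_, ?_, ?_⟩
    · rintro _ ⟨i, rfl⟩
      rw [hf]
      exact Finset.mem_Icc.mp (hLr i)
    · rintro _ ⟨i, rfl⟩ _ ⟨i', rfl⟩ he
      rw [hf, hf] at he
      rw [hLinj he]
    · intro y hy
      have : y ∈ Finset.univ.image L := by rw [hLim]; exact Finset.mem_Icc.mpr hy
      obtain ⟨i, _, rfl⟩ := Finset.mem_image.mp this
      exact ⟨_, ⟨i, rfl⟩, hf i⟩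
  have hw : ∀ v, vertexWeight G f v = ∑ i, if v ∈ edg N k i then L i else 0 := by
    intro v
    unfold vertexWeight
    have : G.edgeFinset = Finset.univ.image (edg N k) := by
      ext e
      rw [mem_edgeFinset, ← hrange]
      simp
    rw [this, Finset.sum_filter, Finset.sum_image (fun _ _ _ _ he => hinj he)]
    simp only [hf]
  have hwr : ∀ i : Fin k, vertexWeight G f (Sum.inr i) = C := by
    intro i
    rw [hw, Fintype.sum_sum_type, Fintype.sum_prod_type, ← h.row i i.isLt, Finset.sum_range]
    simp [edg, L, Finset.sum_ite_irrel]
  have hwl : ∀ j : Fin N, vertexWeight G f (Sum.inl j) = if j.val % 2 = 0 then A else B := by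
    intro j
    rw [hw, Fintype.sum_sum_type, Fintype.sum_prod_type, ← h.col j j.isLt, Finset.sum_range]
    have e1 : ∀ l, (if Sum.inl j ∈ edg N k (Sum.inl l) then L (Sum.inl l) else 0)
        = (if j = l then x l else 0) + (if prv N j = l then x l else 0) := by
      intro l
      have h1 : Sum.inl j ∈ edg N k (Sum.inl l) ↔ j = l ∨ prv N j = l := by
        simp only [edg, Sym2.mem_iff, Sum.inl.injEq]
        rw [eq_nxt_iff, eq_comm (a := l)]
      have h2 : ¬ (j = l ∧ prv N j = l) := by
        have := prv_val N j
        rw [Fin.ext_iff, Fin.ext_iff]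
        omega
      simp only [h1, L, Sum.elim_inl]
      split_ifs <;> first | tauto | simp
    simp only [e1, Finset.sum_add_distrib]
    rw [Finset.sum_ite_eq, Finset.sum_ite_eq]
    simp [edg, L]
    rfl
  have hla : IsLocalAntimagic G f := by
    refine ⟨hbij, ?_⟩
    rintro (u | u) (v | v) huv
    · rw [hG, join_ll, cyc_adj N (by omega)] at huv
      rw [hwl, hwl]
      have h1 := nxt_val N u
      have h2 := nxt_val N v
      have h3 := h.ev
      have h4 := h.ab
      have h5 : (u.val % 2 = 0 ∧ ¬ v.val % 2 = 0) ∨ (v.val % 2 = 0 ∧ ¬ u.val % 2 = 0) := by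
        rw [Fin.ext_iff, Fin.ext_iff] at huv
        omega
      rcases h5 with ⟨h6, h7⟩ | ⟨h6, h7⟩
      · rw [if_pos h6, if_neg h7]; exact h4
      · rw [if_pos h6, if_neg h7]; exact h4.symm
    · rw [hwl, hwr]
      have := h.ac
      have := h.bc
      split_ifs <;> assumption
    · rw [hwl, hwr]
      have := h.ac.symm
      have := h.bc.symm
      split_ifs <;> assumption
    · exact absurd huv (join_rr _ _ _)
  apply le_antisymm
  · have hle : colorCount G f ≤ 3 := by
      unfold colorCount
      calc _ ≤ ({A, B, C} : Finset ℕ).card := by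
            apply Finset.card_le_card
            intro y hy
            obtain ⟨v, _, rfl⟩ := Finset.mem_image.mp hy
            rcases v with j | i
            · rw [hwl]; split_ifs <;> simp
            · rw [hwr]; simp
        _ ≤ 3 := Finset.card_le_three
    exact le_trans (Nat.sInf_le ⟨f, hla, rfl⟩) hle
  · have hne : {n | ∃ f, IsLocalAntimagic G f ∧ colorCount G f = n}.Nonempty := ⟨_, f, hla, rfl⟩
    obtain ⟨f, h1, h2⟩ := Nat.sInf_mem hne
    unfold chiLA
    rw [← h2]
    exact chi_lower N k hN hk f h1

lemma data_of_cent {m k : ℕ} {D w : ℤ} {x : ℕ → ℤ} {a : ℕ → ℕ → ℤ} (hm : 2 ≤ m) (hk : 1 ≤ k)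
    (hD : D = 2 * m * (k + 1)) (h : Cent m k D w x a) :
    ∃ A B C x' a', LData (2 * m) k A B C x' a' := by
  have hDe : D % 2 = 0 := by rw [hD, mul_assoc]; simp
  have hDn : D = ((2 * m * (k + 1) : ℕ) : ℤ) := by rw [hD]; push_cast; ring
  let g : ℤ → ℕ := fun d => ((D + 1 + d) / 2).toNat
  have hg : ∀ d : ℤ, d % 2 = 1 ∧ -D < d ∧ d < D → 2 * (g d : ℤ) = D + 1 + d := by
    intro d hd
    simp only [g]
    omega
  have hsum : ∀ (n : ℕ) (b : ℕ → ℤ), (∀ i < n, b i % 2 = 1 ∧ -D < b i ∧ b i < D) →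
      2 * ((∑ i ∈ Finset.range n, g (b i) : ℕ) : ℤ) = n * (D + 1) + ∑ i ∈ Finset.range n, b i := by
    intro n b hb
    induction n with
    | zero => simp
    | succ n ih =>
      rw [Finset.sum_range_succ, Finset.sum_range_succ]
      have h1 := ih (fun i hi => hb i (by omega))
      have h2 := hg _ (hb n (by omega))
      push_cast at h1 ⊢
      linarith
  let R : ℕ → ℕ := fun i => ∑ j ∈ Finset.range (2 * m), g (a i j)
  let S : ℕ → ℕ := fun j => g (x j) + g (x (if j = 0 then 2 * m - 1 else j - 1)) +
    ∑ i ∈ Finset.range k, g (a i j)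
  have hR : ∀ i < k, 2 * (R i : ℤ) = (2 * m) * (D + 1) := by
    intro i hi
    have := hsum (2 * m) (a i) (h.ar i hi)
    rw [h.row i hi] at this
    simp only [R]
    rw [this]
    push_cast
    ring
  have hS : ∀ j < 2 * m, 2 * (S j : ℤ) = (k + 2) * (D + 1) + if j % 2 = 0 then w else -w := by
    intro j hj
    have h1 := hsum k (fun i => a i j) (fun i hi => h.ar i hi j hj)
    have h2 := hg _ (h.xr j hj)
    have h3 := hg _ (h.xr (if j = 0 then 2 * m - 1 else j - 1) (by split_ifs <;> omega))
    rw [← h.col j hj]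
    simp only [S]
    push_cast at h1 ⊢
    linarith
  have hw := h.wpos
  have hwD := h.wlt
  have hR0 := hR 0 (by omega)
  have hS0 := hS 0 (by omega)
  have hS1 := hS 1 (by omega)
  rw [if_pos (by omega)] at hS0
  rw [if_neg (by omega)] at hS1
  have hnd : ¬ (D + 1) ∣ w := fun hd => by
    have := Int.le_of_dvd hw hd
    omega
  refine ⟨S 0, S 1, R 0, fun j => g (x j), fun i j => g (a i j), ?_, ?_, ?_, ?_, ?_, ?_, ?_, ?_, ?_, ?_, ?_⟩
  · omega
  · intro j hj
    have h1 := h.xr j hj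
    have h2 := hg _ h1
    rw [hDn] at h1 h2
    omega
  · intro i hi j hj
    have h1 := h.ar i hi j hj
    have h2 := hg _ h1
    rw [hDn] at h1 h2
    omega
  · intro i hi j hj he
    have h1 := hg _ (h.xr i hi)
    have h2 := hg _ (h.xr j hj)
    exact h.xx i hi j hj (by omega)
  · intro j hj i hi l hl he
    have h1 := hg _ (h.xr j hj)
    have h2 := hg _ (h.ar i hi l hl)
    exact h.xa j hj i hi l hl (by omega)
  · intro i hi j hj i' hi' j' hj' he
    have h1 := hg _ (h.ar i hi j hj)
    have h2 := hg _ (h.ar i' hi' j' hj')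
    exact h.aa i hi j hj i' hi' j' hj' (by omega)
  · intro i hi
    have h1 := hR i hi
    have : R i = R 0 := by omega
    exact this
  · intro j hj
    have h1 := hS j hj
    have : S j = if j % 2 = 0 then S 0 else S 1 := by
      split_ifs at h1 ⊢ <;> omega
    exact this
  · intro he
    rw [he] at hS0
    omega
  · intro he
    rw [he] at hS0
    apply hnd
    refine ⟨2 * m - (k + 2), ?_⟩
    linarith
  · intro he
    rw [he] at hS1
    apply hnd
    refine ⟨(k + 2) - 2 * m, ?_⟩
    linarith

lemma cent_iter {m k : ℕ} (hm : 2 ≤ m) {x : ℕ → ℤ} (r : ℕ)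
    (h : ∃ w a, Cent m k (2 * m * (k + 1)) w x a) :
    ∃ w a, Cent m (k + 2 * r) (2 * m * ((k + 2 * r : ℕ) + 1)) w x a := by
  induction r with
  | zero => simpa using h
  | succ r ih =>
    obtain ⟨w, a, h1⟩ := ih
    obtain ⟨a', h2⟩ := cent_step (by rw [mul_assoc]; simp) (by omega) h1
    refine ⟨w + 2, a', ?_⟩
    have e : (2 * m * ((k + 2 * (r + 1) : ℕ) + 1) : ℤ) = 2 * m * ((k + 2 * r : ℕ) + 1) + 4 * m := by
      push_cast
      ring
    rw [e]
    exact h2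

lemma chi_of_cent {m k : ℕ} (hm : 2 ≤ m) (hk : 1 ≤ k) (r : ℕ)
    (h : ∃ x a w, Cent m k (2 * m * (k + 1)) w x a) :
    chiLA (joinG (cycleGraph (2 * m)) (⊥ : SimpleGraph (Fin (k + 2 * r)))) = 3 := by
  obtain ⟨x, a, w, h⟩ := h
  obtain ⟨w', a', h'⟩ := cent_iter hm r ⟨w, a, h⟩
  obtain ⟨A, B, C, x1, a1, h1⟩ := data_of_cent hm (by omega) rfl h'
  exact chi_of_data _ _ A B C x1 a1 (by omega) (by omega) h1

lemma cent_four : ∃ x a w, Cent 2 3 (2 * (2 : ℕ) * ((3 : ℕ) + 1)) w x a := by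
  let x : ℕ → ℤ := fun j => if j = 0 then -1 else if j = 1 then -13 else if j = 2 then 1 else 13
  let a : ℕ → ℕ → ℤ := fun i j =>
    if i = 0 then (if j = 0 then -7 else if j = 1 then 15 else if j = 2 then 7 else -15)
    else if i = 1 then (if j = 0 then -5 else if j = 1 then 5 else if j = 2 then 11 else -11)
    else (if j = 0 then 3 else if j = 1 then -9 else if j = 2 then -3 else 9)
  refine ⟨x, a, 3, ?_, ?_, ?_, ?_, ?_, ?_, ?_, ?_, ?_⟩
  · norm_num
  · norm_num
  · simp only [x]; decide
  · simp only [a]; decide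
  · simp only [x]; decide
  · simp only [x, a]; decide
  · intro i hi j hj i' hi' j' hj' he
    interval_cases i <;> interval_cases j <;> simp [a] at he <;> split_ifs at he <;> omega
  · simp only [a]; decide
  · simp only [x, a]; decide

lemma data_four : ∃ x a, LData 4 1 15 11 20 x a := by
  let x : ℕ → ℕ := fun j => if j = 0 then 2 else if j = 1 then 4 else if j = 2 then 3 else 7
  let a : ℕ → ℕ → ℕ := fun _ j => if j = 0 then 6 else if j = 1 then 5 else if j = 2 then 8 else 1
  refine ⟨x, a, ?_, ?_, ?_, ?_, ?_, ?_, ?_, ?_, ?_, ?_, ?_⟩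
  · norm_num
  · simp only [x]; decide
  · simp only [a]; decide
  · simp only [x]; decide
  · simp only [x, a]; decide
  · intro i hi j hj i' hi' j' hj' he
    interval_cases j <;> simp [a] at he <;> split_ifs at he <;> omega
  · simp only [a]; decide
  · simp only [x, a]; decide
  all_goals norm_num

lemma cent_one (m : ℕ) (hm : 3 ≤ m) : ∃ x a w, Cent m 1 (2 * m * ((1 : ℕ) + 1)) w x a := by
  have e : (2 * m * ((1 : ℕ) + 1) : ℤ) = 4 * m := by push_cast; ring
  rw [e]
  rcases Nat.even_or_odd' m with ⟨s, rfl | rfl⟩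
  · rcases Nat.even_or_odd' s with ⟨t, rfl | rfl⟩
    · obtain ⟨x, a, w, h⟩ := cent_zero_mod t (by omega)
      rw [show 2 * (2 * t) = 4 * t by ring]
      exact ⟨x, a, w, h⟩
    · obtain ⟨x, a, w, h⟩ := cent_two_mod t (by omega)
      rw [show 2 * (2 * t + 1) = 4 * t + 2 by ring]
      exact ⟨x, a, w, h⟩
  · exact cent_odd s (by omega)

/-- Theorem: For all integers `m ≥ 2` and `n ≥ 1`, `χ_la(C_{2m} ∨ O_{2n−1}) = 3`. -/
theorem chiLA_evenCycle_join_null_odd (m n : ℕ) (hm : 2 ≤ m) (hn : 1 ≤ n) :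
    chiLA (joinG (cycleGraph (2 * m)) (⊥ : SimpleGraph (Fin (2 * n - 1)))) = 3 := by
  rcases Nat.lt_or_ge m 3 with h3 | h3
  · obtain rfl : m = 2 := by omega
    rcases Nat.lt_or_ge n 2 with h2 | h2
    · obtain rfl : n = 1 := by omega
      obtain ⟨x, a, h⟩ := data_four
      exact chi_of_data 4 1 15 11 20 x a (by omega) (by omega) h
    · obtain ⟨r, hr⟩ : ∃ r, 2 * n - 1 = 3 + 2 * r := ⟨n - 2, by omega⟩
      rw [hr]
      exact chi_of_cent (by omega) (by omega) r cent_four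
  · obtain ⟨r, hr⟩ : ∃ r, 2 * n - 1 = 1 + 2 * r := ⟨n - 1, by omega⟩
    rw [hr]
    exact chi_of_cent hm (by omega) r (cent_one m h3)
end

section
/- For all integers m, n ≥ 2, χ_la(C_{2m} ∨ C_{2n−1}) = 5. -/
open Finset SimpleGraph
open scoped Classical

/-! ### The arithmetic of the matrix of cross edges -/

/-- Centered label of the cross edge from the top vertex of row pair `k` to column `j`. -/
def cjTop (m k j : ℕ) : ℤ :=
  if j = 0 then (if k ≤ m / 2 then 2 * (k : ℤ) else -2 * ((k : ℤ) - ((m / 2 : ℕ) : ℤ)))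
  else if j = 1 then
    (if k = 0 then 2 * (m : ℤ) + ((m / 2 : ℕ) : ℤ) + 1
     else if k ≤ m / 2 then (m : ℤ) + ((m / 2 : ℕ) : ℤ) + 1 - k else 2 * (m : ℤ) + 1 + k)
  else if j = 2 then
    (if k ≤ m / 2 then 2 * (m : ℤ) + ((m / 2 : ℕ) : ℤ) - k else (m : ℤ) + k)
  else if j % 2 = 1 then ((j * m : ℕ) : ℤ) + 2 * k + 1
  else -((((j - 1) * m : ℕ) : ℤ) + 2 * k + 1)

/-- Centered label for the bottom vertex of row pair `k`. -/
def cjBot (m k j : ℕ) : ℤ :=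
  if j = 2 then (if k = 0 then (m : ℤ) else 0) - cjTop m k j else 1 - cjTop m k j

/-- Centered label of the cross edge `(i, j)`. -/
def cjW (m i j : ℕ) : ℤ := if i % 2 = 0 then cjTop m (i / 2) j else cjBot m (i / 2) j

lemma cjTop_row (m k t : ℕ) (hk : k < m) :
    ∑ j ∈ range (2 * (t + 1) + 1), cjTop m k j =
      3 * (m : ℤ) + 2 * ((m / 2 : ℕ) : ℤ) + 1 + if k = 0 then (m : ℤ) else 0 := by
  induction t with
  | zero =>
    have h0 : range (2 * (0 + 1) + 1) = {0, 1, 2} := by decide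
    rw [h0, sum_insert (by decide), sum_insert (by decide), sum_singleton]
    simp only [if_true, if_false, one_ne_zero, OfNat.ofNat_ne_zero, OfNat.ofNat_ne_one, cjTop]
    split_ifs <;> omega
  | succ t ih =>
    rw [show 2 * (t + 1 + 1) + 1 = 2 * (t + 1) + 1 + 1 + 1 by ring, sum_range_succ,
      sum_range_succ, ih]
    have h1 : cjTop m k (2 * (t + 1) + 1) =
        (((2 * (t + 1) + 1) * m : ℕ) : ℤ) + 2 * k + 1 := by
      unfold cjTop
      rw [if_neg (by omega), if_neg (by omega), if_neg (by omega), if_pos (by omega)]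
    have h2 : cjTop m k (2 * (t + 1) + 1 + 1) =
        -((((2 * (t + 1) + 1) * m : ℕ) : ℤ) + 2 * k + 1) := by
      unfold cjTop
      rw [if_neg (by omega), if_neg (by omega), if_neg (by omega), if_neg (by omega)]
      simp
    rw [h1, h2]; ring

lemma cjBot_row (m k t : ℕ) (hk : k < m) :
    ∑ j ∈ range (2 * (t + 1) + 1), cjBot m k j =
      2 * ((t : ℤ) + 1) - (3 * (m : ℤ) + 2 * ((m / 2 : ℕ) : ℤ) + 1) := by
  have h : ∀ j, cjBot m k j =
      (1 - cjTop m k j) + if j = 2 then (if k = 0 then (m : ℤ) else 0) - 1 else 0 := by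
    intro j; unfold cjBot; split_ifs <;> ring
  simp only [h, sum_add_distrib, sum_sub_distrib, cjTop_row m k t hk]
  rw [sum_ite_eq' (range (2 * (t + 1) + 1)) 2, if_pos (mem_range.2 (by omega))]
  simp
  ring

lemma cj_sum_pairs (g : ℕ → ℤ) (m : ℕ) :
    ∑ i ∈ range (2 * m), g i = ∑ k ∈ range m, (g (2 * k) + g (2 * k + 1)) := by
  induction m with
  | zero => simp
  | succ m ih =>
    rw [show 2 * (m + 1) = 2 * m + 1 + 1 by ring, sum_range_succ, sum_range_succ, ih,
      sum_range_succ]; ring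

lemma cjW_even (m k j : ℕ) : cjW m (2 * k) j = cjTop m k j := by
  unfold cjW
  rw [if_pos (by omega), show 2 * k / 2 = k by omega]

lemma cjW_odd (m k j : ℕ) : cjW m (2 * k + 1) j = cjBot m k j := by
  unfold cjW
  rw [if_neg (by omega), show (2 * k + 1) / 2 = k by omega]

lemma cjW_col (m j : ℕ) (hm : 0 < m) : ∑ i ∈ range (2 * m), cjW m i j = m := by
  rw [cj_sum_pairs]
  simp only [cjW_even, cjW_odd, cjBot]
  by_cases hj : j = 2
  · simp only [hj, if_true]
    have : ∀ k, cjTop m k 2 + ((if k = 0 then (m : ℤ) else 0) - cjTop m k 2) =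
      if k = 0 then (m : ℤ) else 0 := by intro k; ring
    simp only [this]
    rw [sum_ite_eq' (range m) 0, if_pos (by simpa using hm)]
  · simp [hj]

/-- The four shapes of a centered label in columns `j ≥ 3`. -/
lemma cjW_big (m i j : ℕ) (hj : 3 ≤ j) : ∃ c, 3 ≤ c ∧ c % 2 = 1 ∧
    ((j = c ∧ i % 2 = 0 ∧ cjW m i j = ((c * m : ℕ) : ℤ) + 2 * (i / 2 : ℕ) + 1) ∨
     (j = c ∧ i % 2 = 1 ∧ cjW m i j = -((c * m : ℕ) : ℤ) - 2 * (i / 2 : ℕ)) ∨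
     (j = c + 1 ∧ i % 2 = 0 ∧ cjW m i j = -((c * m : ℕ) : ℤ) - 2 * (i / 2 : ℕ) - 1) ∨
     (j = c + 1 ∧ i % 2 = 1 ∧ cjW m i j = ((c * m : ℕ) : ℤ) + 2 * (i / 2 : ℕ) + 2)) := by
  unfold cjW cjBot cjTop
  rw [if_neg (show ¬ j = 0 by omega), if_neg (show ¬ j = 1 by omega),
    if_neg (show ¬ j = 2 by omega)]
  rcases Nat.mod_two_eq_zero_or_one j with h | h
  · refine ⟨j - 1, by omega, by omega, ?_⟩
    rcases Nat.mod_two_eq_zero_or_one i with h' | h'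
    · right; right; left
      refine ⟨by omega, h', ?_⟩
      simp only [h, h', if_true, zero_ne_one, if_false]; ring
    · right; right; right
      refine ⟨by omega, h', ?_⟩
      rw [if_neg (by omega), if_neg (by omega), if_neg (by omega)]; ring
  · refine ⟨j, by omega, by omega, ?_⟩
    rcases Nat.mod_two_eq_zero_or_one i with h' | h'
    · left
      refine ⟨by omega, h', ?_⟩
      simp only [h, h', if_true]
    · right; left
      refine ⟨by omega, h', ?_⟩
      rw [if_neg (by omega), if_neg (by omega), if_pos (by omega)]; ring

lemma cjW_small_bound (m i j : ℕ) (hi : i < 2 * m) (hm : 2 ≤ m) (hj : j < 3) :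
    1 - 3 * (m : ℤ) ≤ cjW m i j ∧ cjW m i j ≤ 3 * (m : ℤ) := by
  unfold cjW cjBot cjTop
  have : j = 0 ∨ j = 1 ∨ j = 2 := by omega
  rcases this with rfl | rfl | rfl <;> simp <;> split_ifs <;> omega

lemma cjW_small_inj (m i j i' j' : ℕ) (hi : i < 2 * m) (hi' : i' < 2 * m) (hm : 2 ≤ m)
    (hj : j < 3) (hj' : j' < 3) (h : cjW m i j = cjW m i' j') : i = i' ∧ j = j' := by
  unfold cjW cjBot cjTop at h
  have h1 : j = 0 ∨ j = 1 ∨ j = 2 := by omega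
  have h2 : j' = 0 ∨ j' = 1 ∨ j' = 2 := by omega
  rcases h1 with rfl | rfl | rfl <;> rcases h2 with rfl | rfl | rfl <;>
    simp only [if_true, if_false, one_ne_zero, OfNat.ofNat_ne_zero, OfNat.ofNat_ne_one,
      OfNat.zero_ne_ofNat, OfNat.one_ne_ofNat, zero_ne_one] at h <;>
    split_ifs at h <;> omega

lemma cjW_bound (m i j N : ℕ) (hi : i < 2 * m) (hm : 2 ≤ m) (hN : N % 2 = 1) (hN3 : 3 ≤ N)
    (hj : j < N) :
    1 - ((N * m : ℕ) : ℤ) ≤ cjW m i j ∧ cjW m i j ≤ ((N * m : ℕ) : ℤ) := by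
  by_cases h : j < 3
  · have h1 := cjW_small_bound m i j hi hm h
    have h2 : 3 * m ≤ N * m := Nat.mul_le_mul_right _ hN3
    omega
  · obtain ⟨c, hc, hc2, H⟩ := cjW_big m i j (by omega)
    have h2 : (c + 2) * m ≤ N * m := Nat.mul_le_mul_right _ (by omega)
    rw [Nat.add_mul] at h2
    omega

lemma cjW_inj (m i j i' j' : ℕ) (hi : i < 2 * m) (hi' : i' < 2 * m) (hm : 2 ≤ m)
    (h : cjW m i j = cjW m i' j') : i = i' ∧ j = j' := by
  by_cases hj : j < 3 <;> by_cases hj' : j' < 3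
  · exact cjW_small_inj m i j i' j' hi hi' hm hj hj' h
  · exfalso
    have h1 := cjW_small_bound m i j hi hm hj
    obtain ⟨c, hc, hc2, H⟩ := cjW_big m i' j' (by omega)
    have h2 : 3 * m ≤ c * m := Nat.mul_le_mul_right _ hc
    omega
  · exfalso
    have h1 := cjW_small_bound m i' j' hi' hm hj'
    obtain ⟨c, hc, hc2, H⟩ := cjW_big m i j (by omega)
    have h2 : 3 * m ≤ c * m := Nat.mul_le_mul_right _ hc
    omega
  · obtain ⟨c, hc, hc2, H⟩ := cjW_big m i j (by omega)
    obtain ⟨c', hc', hc2', H'⟩ := cjW_big m i' j' (by omega)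
    rcases Nat.lt_trichotomy c c' with hcc | hcc | hcc
    · exfalso
      have h2 : (c + 2) * m ≤ c' * m := Nat.mul_le_mul_right _ (by omega)
      rw [Nat.add_mul] at h2
      omega
    · subst hcc
      omega
    · exfalso
      have h2 : (c' + 2) * m ≤ c * m := Nat.mul_le_mul_right _ (by omega)
      rw [Nat.add_mul] at h2
      omega

/-! ### The graph side -/

/-- An enumeration of the edges of the join of two cycles. -/
def cjPhi (a b : ℕ) : Fin (a + 3) ⊕ (Fin (b + 3) ⊕ (Fin (a + 3) × Fin (b + 3))) →
    Sym2 (Fin (a + 3) ⊕ Fin (b + 3))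
  | Sum.inl i => s(Sum.inl i, Sum.inl (i + 1))
  | Sum.inr (Sum.inl j) => s(Sum.inr j, Sum.inr (j + 1))
  | Sum.inr (Sum.inr p) => s(Sum.inl p.1, Sum.inr p.2)

lemma cj_two_ne (a : ℕ) (i : Fin (a + 3)) : i + 1 + 1 ≠ i := by
  intro h
  have h1 : (1 : Fin (a + 3)) + 1 = 0 := by
    rw [add_assoc] at h
    simpa using h
  have := congrArg Fin.val h1
  rw [Fin.val_add] at this
  simp at this
  rw [Nat.mod_eq_of_lt (by omega)] at this
  omega

lemma cj_one_ne (a : ℕ) (i : Fin (a + 3)) : i + 1 ≠ i := by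
  intro h
  have h1 : (1 : Fin (a + 3)) = 0 := add_eq_left.1 h
  exact absurd h1 (by simp)

lemma cjPhi_inj (a b : ℕ) : Function.Injective (cjPhi a b) := by
  rintro (i | j | ⟨i, j⟩) (i' | j' | ⟨i', j'⟩) h <;> simp [cjPhi] at h ⊢
  · rcases h with h | ⟨h, h'⟩
    · exact h
    · exact absurd (by rw [h', ← h]) (cj_two_ne a i)
  · rcases h with h | ⟨h, h'⟩
    · exact h
    · exact absurd (by rw [h', ← h]) (cj_two_ne b j)
  · exact h

lemma cj_cycle_adj (a : ℕ) (u v : Fin (a + 3)) :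
    (cycleGraph (a + 3)).Adj u v ↔ v = u + 1 ∨ u = v + 1 := by
  rw [cycleGraph_adj, sub_eq_iff_eq_add', sub_eq_iff_eq_add', or_comm]

lemma cj_adj_ll {α β : Type*} (G : SimpleGraph α) (H : SimpleGraph β) (x y : α) :
    (joinG G H).Adj (Sum.inl x) (Sum.inl y) ↔ G.Adj x y := by
  simp only [joinG, fromRel_adj]
  constructor
  · rintro ⟨-, h⟩
    simp at h
    exact h.elim id fun h => h.symm
  · intro h
    simp [h, h.ne]

lemma cj_adj_rr {α β : Type*} (G : SimpleGraph α) (H : SimpleGraph β) (x y : β) :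
    (joinG G H).Adj (Sum.inr x) (Sum.inr y) ↔ H.Adj x y := by
  simp only [joinG, fromRel_adj]
  constructor
  · rintro ⟨-, h⟩
    simp at h
    exact h.elim id fun h => h.symm
  · intro h
    simp [h, h.ne]

lemma cj_adj_lr {α β : Type*} (G : SimpleGraph α) (H : SimpleGraph β) (x : α) (y : β) :
    (joinG G H).Adj (Sum.inl x) (Sum.inr y) := by
  simp [joinG, fromRel_adj]

lemma cjPhi_range (a b : ℕ) : Set.range (cjPhi a b) =
    (joinG (cycleGraph (a + 3)) (cycleGraph (b + 3))).edgeSet := by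
  ext e
  constructor
  · rintro ⟨i | j | ⟨i, j⟩, rfl⟩
    · simp only [cjPhi, mem_edgeSet, cj_adj_ll, cj_cycle_adj, true_or]
    · simp only [cjPhi, mem_edgeSet, cj_adj_rr, cj_cycle_adj, true_or]
    · exact cj_adj_lr _ _ _ _
  · induction e using Sym2.ind with
    | _ x y =>
      rw [mem_edgeSet]
      intro h
      rcases x with x | x <;> rcases y with y | y
      · rw [cj_adj_ll, cj_cycle_adj] at h
        rcases h with rfl | rfl
        · exact ⟨Sum.inl x, rfl⟩
        · exact ⟨Sum.inl y, Sym2.eq_swap⟩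
      · exact ⟨Sum.inr (Sum.inr (x, y)), rfl⟩
      · exact ⟨Sum.inr (Sum.inr (y, x)), Sym2.eq_swap⟩
      · rw [cj_adj_rr, cj_cycle_adj] at h
        rcases h with rfl | rfl
        · exact ⟨Sum.inr (Sum.inl x), rfl⟩
        · exact ⟨Sum.inr (Sum.inl y), Sym2.eq_swap⟩

/-- The labeling of `Sym2` obtained from a labeling of the enumerated edges. -/
noncomputable def cjF (a b : ℕ)
    (lab : Fin (a + 3) ⊕ (Fin (b + 3) ⊕ (Fin (a + 3) × Fin (b + 3))) → ℕ) :
    Sym2 (Fin (a + 3) ⊕ Fin (b + 3)) → ℕ :=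
  Function.extend (cjPhi a b) lab 0

lemma cjF_phi (a b : ℕ) (lab) (x) : cjF a b lab (cjPhi a b x) = lab x :=
  (cjPhi_inj a b).extend_apply _ _ _

lemma cj_ncard (a b : ℕ) :
    (joinG (cycleGraph (a + 3)) (cycleGraph (b + 3))).edgeSet.ncard =
      (a + 3) + ((b + 3) + (a + 3) * (b + 3)) := by
  rw [← cjPhi_range, ← Set.image_univ, Set.ncard_image_of_injective _ (cjPhi_inj a b),
    Set.ncard_univ]
  simp

lemma cjF_bij (a b : ℕ) (lab) (hinj : Function.Injective lab)
    (hle : ∀ x, 1 ≤ lab x ∧ lab x ≤ (a + 3) + ((b + 3) + (a + 3) * (b + 3))) :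
    Set.BijOn (cjF a b lab)
      (joinG (cycleGraph (a + 3)) (cycleGraph (b + 3))).edgeSet
      (Set.Icc 1 (joinG (cycleGraph (a + 3)) (cycleGraph (b + 3))).edgeSet.ncard) := by
  rw [cj_ncard, ← cjPhi_range]
  have himg : Finset.univ.image lab =
      Finset.Icc 1 ((a + 3) + ((b + 3) + (a + 3) * (b + 3))) := by
    apply Finset.eq_of_subset_of_card_le
    · intro x hx
      obtain ⟨y, -, rfl⟩ := Finset.mem_image.1 hx
      exact Finset.mem_Icc.2 (hle y)
    · rw [Finset.card_image_of_injective _ hinj]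
      simp
  refine ⟨?_, ?_, ?_⟩
  · rintro _ ⟨x, rfl⟩
    rw [cjF_phi]
    exact hle x
  · rintro _ ⟨x, rfl⟩ _ ⟨y, rfl⟩ h
    rw [cjF_phi, cjF_phi] at h
    rw [hinj h]
  · intro v hv
    have : v ∈ Finset.univ.image lab := by
      rw [himg]; exact Finset.mem_Icc.2 hv
    obtain ⟨y, -, rfl⟩ := Finset.mem_image.1 this
    exact ⟨cjPhi a b y, ⟨y, rfl⟩, cjF_phi a b lab y⟩

lemma cj_weight (a b : ℕ) (lab) (x : Fin (a + 3) ⊕ Fin (b + 3)) :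
    vertexWeight (joinG (cycleGraph (a + 3)) (cycleGraph (b + 3))) (cjF a b lab) x =
      ∑ y, if x ∈ cjPhi a b y then lab y else 0 := by
  unfold vertexWeight
  have : (joinG (cycleGraph (a + 3)) (cycleGraph (b + 3))).edgeFinset =
      Finset.univ.image (cjPhi a b) := by
    ext e
    rw [mem_edgeFinset, ← cjPhi_range]
    simp
  rw [Finset.sum_filter, this, Finset.sum_image fun _ _ _ _ h => cjPhi_inj a b h]
  simp only [cjF_phi]

lemma cj_sum_two (a : ℕ) (g : Fin (a + 3) → ℕ) (i : Fin (a + 3)) :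
    (∑ y, if i = y ∨ i = y + 1 then g y else 0) = g i + g (i - 1) := by
  have hne : i ≠ i - 1 := by
    intro h
    have := cj_one_ne a (i - 1)
    rw [sub_add_cancel] at this
    exact this h
  rw [← Finset.sum_filter]
  have : (Finset.univ.filter fun y => i = y ∨ i = y + 1) = {i, i - 1} := by
    ext y
    simp only [Finset.mem_filter, Finset.mem_univ, true_and, Finset.mem_insert,
      Finset.mem_singleton]
    rw [eq_sub_iff_add_eq, eq_comm, eq_comm (a := i) (b := y + 1)]
  rw [this, Finset.sum_pair hne]

lemma cj_weight_l (a b : ℕ) (lab) (i : Fin (a + 3)) :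
    vertexWeight (joinG (cycleGraph (a + 3)) (cycleGraph (b + 3))) (cjF a b lab) (Sum.inl i) =
      lab (Sum.inl i) + lab (Sum.inl (i - 1)) + ∑ j, lab (Sum.inr (Sum.inr (i, j))) := by
  rw [cj_weight, Fintype.sum_sum_type, Fintype.sum_sum_type, Fintype.sum_prod_type]
  simp only [cjPhi, Sym2.mem_iff, Sum.inl.injEq, reduceCtorEq, or_false, if_false,
    Finset.sum_const_zero, zero_add]
  rw [cj_sum_two a (fun y => lab (Sum.inl y)) i, Finset.sum_comm]
  simp

lemma cj_weight_r (a b : ℕ) (lab) (j : Fin (b + 3)) :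
    vertexWeight (joinG (cycleGraph (a + 3)) (cycleGraph (b + 3))) (cjF a b lab) (Sum.inr j) =
      lab (Sum.inr (Sum.inl j)) + lab (Sum.inr (Sum.inl (j - 1))) +
        ∑ i, lab (Sum.inr (Sum.inr (i, j))) := by
  rw [cj_weight, Fintype.sum_sum_type, Fintype.sum_sum_type, Fintype.sum_prod_type]
  simp only [cjPhi, Sym2.mem_iff, Sum.inr.injEq, reduceCtorEq, or_false, false_or, if_false,
    Finset.sum_const_zero, zero_add]
  rw [cj_sum_two b (fun y => lab (Sum.inr (Sum.inl y))) j]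
  simp

lemma cj_lower (a b : ℕ) (hb : Odd (b + 3)) (f : Sym2 (Fin (a + 3) ⊕ Fin (b + 3)) → ℕ)
    (hf : IsLocalAntimagic (joinG (cycleGraph (a + 3)) (cycleGraph (b + 3))) f) :
    5 ≤ colorCount (joinG (cycleGraph (a + 3)) (cycleGraph (b + 3))) f := by
  set G := joinG (cycleGraph (a + 3)) (cycleGraph (b + 3)) with hG
  set w := vertexWeight G f with hw
  set S := Finset.univ.image (fun i => w (Sum.inl i)) with hS
  set T := Finset.univ.image (fun i => w (Sum.inr i)) with hT
  have hsub : S ∪ T ⊆ Finset.univ.image w := by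
    intro x hx
    rcases Finset.mem_union.1 hx with h | h
    · obtain ⟨i, -, rfl⟩ := Finset.mem_image.1 h
      exact Finset.mem_image_of_mem _ (Finset.mem_univ _)
    · obtain ⟨i, -, rfl⟩ := Finset.mem_image.1 h
      exact Finset.mem_image_of_mem _ (Finset.mem_univ _)
  have hdis : Disjoint S T := by
    rw [Finset.disjoint_left]
    intro x h h'
    obtain ⟨i, -, hi⟩ := Finset.mem_image.1 h
    obtain ⟨j, -, hj⟩ := Finset.mem_image.1 h'
    exact hf.2 (cj_adj_lr _ _ i j) (hi.trans hj.symm)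
  have hS2 : 2 ≤ S.card := by
    have : ({w (Sum.inl 0), w (Sum.inl (0 + 1))} : Finset ℕ) ⊆ S := by
      intro x hx
      simp only [Finset.mem_insert, Finset.mem_singleton] at hx
      rcases hx with rfl | rfl
      · exact Finset.mem_image_of_mem (fun i => w (Sum.inl i)) (Finset.mem_univ _)
      · exact Finset.mem_image_of_mem (fun i => w (Sum.inl i)) (Finset.mem_univ _)
    have h2 := Finset.card_le_card this
    rwa [Finset.card_pair] at h2
    apply hf.2
    rw [cj_adj_ll, cj_cycle_adj]
    exact Or.inl rfl
  have hT3 : 3 ≤ T.card := by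
    let C : (cycleGraph (b + 3)).Coloring T :=
      Coloring.mk (fun j => ⟨w (Sum.inr j),
        Finset.mem_image_of_mem (fun i => w (Sum.inr i)) (Finset.mem_univ j)⟩) (by
          intro u v huv h
          exact hf.2 ((cj_adj_rr _ _ u v).2 huv) (congrArg Subtype.val h))
    have h1 := C.colorable
    rw [Fintype.card_coe] at h1
    have h2 := h1.chromaticNumber_le
    rw [chromaticNumber_cycleGraph_of_odd (b + 3) (by omega) hb] at h2
    exact_mod_cast h2
  have := Finset.card_le_card hsub
  rw [Finset.card_union_of_disjoint hdis] at this
  change 5 ≤ (Finset.univ.image w).card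
  omega

/-! ### The labeling -/

/-- Zigzag labels on a cycle with `M` edges. -/
def cjE (M i : ℕ) : ℕ := if i % 2 = 0 then i / 2 + 1 else M - i / 2

/-- The labeling of the enumerated edges. -/
def cjLab (a b m : ℕ) : Fin (a + 3) ⊕ (Fin (b + 3) ⊕ (Fin (a + 3) × Fin (b + 3))) → ℕ
  | Sum.inl i => cjE (a + 3) i
  | Sum.inr (Sum.inl j) => (a + 3) + cjE (b + 3) j
  | Sum.inr (Sum.inr p) =>
    ((((a + 3) + (b + 3) + (b + 3) * m : ℕ) : ℤ) + cjW m p.1 p.2).toNat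

lemma cjE_bound (M i : ℕ) (hi : i < M) : 1 ≤ cjE M i ∧ cjE M i ≤ M := by
  unfold cjE; split_ifs <;> omega

lemma cjE_inj (M i i' : ℕ) (hi : i < M) (hi' : i' < M) (h : cjE M i = cjE M i') : i = i' := by
  unfold cjE at h; split_ifs at h <;> omega

lemma cjLab_cross (a b m t : ℕ) (hm : 2 ≤ m) (ha : a + 3 = 2 * m) (hb : b + 3 = 2 * (t + 1) + 1)
    (i : Fin (a + 3)) (j : Fin (b + 3)) :
    ((cjLab a b m (Sum.inr (Sum.inr (i, j))) : ℕ) : ℤ) =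
      (((a + 3) + (b + 3) + (b + 3) * m : ℕ) : ℤ) + cjW m i j := by
  have h := cjW_bound m i j (b + 3) (by omega) hm (by omega) (by omega) j.2
  simp only [cjLab]
  rw [Int.toNat_of_nonneg]
  omega

lemma cjLab_le (a b m t : ℕ) (hm : 2 ≤ m) (ha : a + 3 = 2 * m) (hb : b + 3 = 2 * (t + 1) + 1)
    (x) : 1 ≤ cjLab a b m x ∧ cjLab a b m x ≤ (a + 3) + ((b + 3) + (a + 3) * (b + 3)) := by
  have hmul : (a + 3) * (b + 3) = 2 * ((b + 3) * m) := by rw [ha]; ring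
  rcases x with i | j | ⟨i, j⟩
  · have := cjE_bound (a + 3) i i.2
    simp only [cjLab]
    omega
  · have := cjE_bound (b + 3) j j.2
    simp only [cjLab]
    omega
  · have h := cjW_bound m i j (b + 3) (by omega) hm (by omega) (by omega) j.2
    have h2 := cjLab_cross a b m t hm ha hb i j
    omega

lemma cjLab_inj (a b m t : ℕ) (hm : 2 ≤ m) (ha : a + 3 = 2 * m)
    (hb : b + 3 = 2 * (t + 1) + 1) : Function.Injective (cjLab a b m) := by
  have hx : ∀ (i : Fin (a + 3)) (j : Fin (b + 3)),
      (a + 3) + (b + 3) < cjLab a b m (Sum.inr (Sum.inr (i, j))) := by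
    intro i j
    have h := cjW_bound m i j (b + 3) (by omega) hm (by omega) (by omega) j.2
    have h2 := cjLab_cross a b m t hm ha hb i j
    omega
  have he : ∀ i : Fin (a + 3), cjLab a b m (Sum.inl i) ≤ a + 3 :=
    fun i => (cjE_bound (a + 3) i i.2).2
  have hd : ∀ j : Fin (b + 3), a + 3 < cjLab a b m (Sum.inr (Sum.inl j)) ∧
      cjLab a b m (Sum.inr (Sum.inl j)) ≤ (a + 3) + (b + 3) := by
    intro j
    have := cjE_bound (b + 3) j j.2
    simp only [cjLab]
    omega
  rintro (i | j | ⟨i, j⟩) (i' | j' | ⟨i', j'⟩) h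
  · exact congrArg _ (Fin.ext (cjE_inj (a + 3) i i' i.2 i'.2 h))
  · have := he i; have := hd j'; omega
  · have := he i; have := hx i' j'; omega
  · have := he i'; have := hd j; omega
  · simp only [cjLab] at h
    have := Fin.ext (cjE_inj (b + 3) j j' j.2 j'.2 (by omega))
    rw [this]
  · have := hd j; have := hx i' j'; omega
  · have := he i'; have := hx i j; omega
  · have := hd j'; have := hx i j; omega
  · have h1 := cjLab_cross a b m t hm ha hb i j
    have h2 := cjLab_cross a b m t hm ha hb i' j'
    have h3 := cjW_inj m i j i' j' (by omega) (by omega) hm (by omega)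
    rw [Fin.ext h3.1, Fin.ext h3.2]

lemma cj_pred (a : ℕ) (i : Fin (a + 3)) :
    ((i - 1 : Fin (a + 3)) : ℕ) = if (i : ℕ) = 0 then a + 2 else (i : ℕ) - 1 := by
  have h := Fin.val_add (i - 1) 1
  rw [sub_add_cancel] at h
  have h1 : ((1 : Fin (a + 3)) : ℕ) = 1 := by simp
  rw [h1] at h
  have h2 := (i - 1).2
  rcases Nat.lt_or_ge (((i - 1 : Fin (a + 3)) : ℕ) + 1) (a + 3) with h3 | h3
  · rw [Nat.mod_eq_of_lt h3] at h
    rw [if_neg (by omega)]; omega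
  · have h4 : ((i - 1 : Fin (a + 3)) : ℕ) + 1 = a + 3 := by omega
    rw [h4, Nat.mod_self] at h
    rw [if_pos h]; omega

/-- Zigzag sums around a cycle. -/
lemma cjE_sum (a : ℕ) (i : Fin (a + 3)) :
    cjE (a + 3) i + cjE (a + 3) (i - 1 : Fin (a + 3)) =
      if (i : ℕ) = 0 then 1 + cjE (a + 3) (a + 2)
      else if (i : ℕ) % 2 = 1 then a + 4 else a + 5 := by
  rw [cj_pred]
  have := i.2
  split_ifs with h h'
  · rw [h]; rfl
  · unfold cjE
    rw [if_neg (by omega), if_pos (by omega)]; omega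
  · unfold cjE
    rw [if_pos (by omega), if_neg (by omega)]; omega

lemma cj_wt_l (a b m t : ℕ) (hm : 2 ≤ m) (ha : a + 3 = 2 * m) (hb : b + 3 = 2 * (t + 1) + 1)
    (i : Fin (a + 3)) :
    ((vertexWeight (joinG (cycleGraph (a + 3)) (cycleGraph (b + 3)))
      (cjF a b (cjLab a b m)) (Sum.inl i) : ℕ) : ℤ) =
    (((b + 3) * ((a + 3) + (b + 3) + (b + 3) * m) : ℕ) : ℤ) +
      if (i : ℕ) % 2 = 0 then 5 * (m : ℤ) + 2 * ((m / 2 : ℕ) : ℤ) + 3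
      else 2 * ((t : ℤ) + 1) - (m + 2 * ((m / 2 : ℕ) : ℤ)) := by
  rw [cj_weight_l]
  push_cast
  have hs : ∑ j, ((cjLab a b m (Sum.inr (Sum.inr (i, j))) : ℕ) : ℤ) =
      (((b + 3) * ((a + 3) + (b + 3) + (b + 3) * m) : ℕ) : ℤ) +
        ∑ j ∈ range (b + 3), cjW m i j := by
    rw [← Fin.sum_univ_eq_sum_range (fun j => cjW m i j) (b + 3)]
    simp only [cjLab_cross a b m t hm ha hb, sum_add_distrib]
    simp
  have he : ((cjLab a b m (Sum.inl i) : ℕ) : ℤ) + ((cjLab a b m (Sum.inl (i - 1)) : ℕ) : ℤ) =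
      ((if (i : ℕ) = 0 then 1 + cjE (a + 3) (a + 2)
      else if (i : ℕ) % 2 = 1 then a + 4 else a + 5 : ℕ) : ℤ) := by
    rw [← cjE_sum]; simp only [cjLab]; push_cast; rfl
  have hlast : cjE (a + 3) (a + 2) = m + 1 := by
    unfold cjE; rw [if_neg (by omega)]; omega
  rw [hs, he, hb, hlast]
  have e4 : (b : ℤ) = 2 * t := by omega
  rcases Nat.even_or_odd' (i : ℕ) with ⟨k, hk | hk⟩
  · have hkm : k < m := by have := i.2; omega
    rw [hk]
    simp only [cjW_even]
    rw [cjTop_row m k t hkm]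
    push_cast
    have e1 : 2 * k % 2 = 0 := by omega
    by_cases hk0 : k = 0
    · subst hk0; simp; rw [e4]; ring
    · have e2 : ¬ (2 * k = 0) := by omega
      have e3 : (a : ℤ) = 2 * m - 3 := by omega
      simp only [hk0, e1, e2, if_false, if_true, zero_ne_one, e3]
      rw [e4]
      ring
  · have hkm : k < m := by have := i.2; omega
    rw [hk]
    simp only [cjW_odd]
    rw [cjBot_row m k t hkm]
    have e1 : (2 * k + 1) % 2 = 1 := by omega
    have e2 : ¬ (2 * k + 1 = 0) := by omega
    have e3 : (a : ℤ) = 2 * m - 3 := by omega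
    simp only [e1, e2, if_false, if_true, one_ne_zero, e3]
    push_cast
    rw [e3, e4]
    ring

lemma cj_wt_r (a b m t : ℕ) (hm : 2 ≤ m) (ha : a + 3 = 2 * m) (hb : b + 3 = 2 * (t + 1) + 1)
    (j : Fin (b + 3)) :
    ((vertexWeight (joinG (cycleGraph (a + 3)) (cycleGraph (b + 3)))
      (cjF a b (cjLab a b m)) (Sum.inr j) : ℕ) : ℤ) =
    (((a + 3) * ((a + 3) + (b + 3) + (b + 3) * m) : ℕ) : ℤ) + 5 * m +
      if (j : ℕ) = 0 then (t : ℤ) + 3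
      else if (j : ℕ) % 2 = 1 then 2 * (t : ℤ) + 4 else 2 * (t : ℤ) + 5 := by
  rw [cj_weight_r]
  push_cast
  have hs : ∑ i, ((cjLab a b m (Sum.inr (Sum.inr (i, j))) : ℕ) : ℤ) =
      (((a + 3) * ((a + 3) + (b + 3) + (b + 3) * m) : ℕ) : ℤ) + m := by
    have h0 := cjW_col m j (by omega)
    rw [← ha, ← Fin.sum_univ_eq_sum_range (fun i => cjW m i j) (a + 3)] at h0
    simp only [cjLab_cross a b m t hm ha hb, sum_add_distrib]
    rw [h0]
    simp
  have he : ((cjLab a b m (Sum.inr (Sum.inl j)) : ℕ) : ℤ) +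
      ((cjLab a b m (Sum.inr (Sum.inl (j - 1))) : ℕ) : ℤ) = 4 * m +
      ((if (j : ℕ) = 0 then 1 + cjE (b + 3) (b + 2)
      else if (j : ℕ) % 2 = 1 then b + 4 else b + 5 : ℕ) : ℤ) := by
    rw [← cjE_sum]; simp only [cjLab]; push_cast
    have e3 : (a : ℤ) = 2 * m - 3 := by omega
    rw [e3]; ring
  have hlast : cjE (b + 3) (b + 2) = t + 2 := by
    unfold cjE; rw [if_pos (by omega)]; omega
  rw [hs, he, hlast]
  have e3 : (b : ℤ) = 2 * t := by omega
  push_cast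
  split_ifs
  · ring
  · rw [e3]; ring
  · rw [e3]; ring

/-- Comparison of the two groups of weights. -/
lemma cj_sep (M N m K : ℕ) (A D : ℤ) (hm : 2 ≤ m) (hM : M = 2 * m) (hN : N % 2 = 1)
    (hN3 : 3 ≤ N) (hK : K = M + N + N * m)
    (hA1 : (N : ℤ) - 2 * m - 1 ≤ A ∨ 0 ≤ A) (hA2 : A ≤ 6 * m + N + 3)
    (hD1 : 5 * (m : ℤ) + 1 ≤ D) (hD2 : D ≤ 5 * m + N + 2) :
    ((N * K : ℕ) : ℤ) + A ≠ ((M * K : ℕ) : ℤ) + D := by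
  have h3 : 3 * m ≤ N * m := Nat.mul_le_mul_right _ hN3
  rcases Nat.lt_or_ge N M with h | h
  · have h1 : (N + 1) * K ≤ M * K := Nat.mul_le_mul_right _ h
    rw [Nat.add_mul] at h1
    omega
  · have h1 : (M + 1) * K ≤ N * K := Nat.mul_le_mul_right _ (by omega)
    have h5 : 5 * m ≤ N * m := Nat.mul_le_mul_right _ (by omega)
    rw [Nat.add_mul] at h1
    omega

lemma cj_exists (a b m t : ℕ) (hm : 2 ≤ m) (ha : a + 3 = 2 * m)
    (hb : b + 3 = 2 * (t + 1) + 1) :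
    ∃ f : Sym2 (Fin (a + 3) ⊕ Fin (b + 3)) → ℕ,
      IsLocalAntimagic (joinG (cycleGraph (a + 3)) (cycleGraph (b + 3))) f ∧
      colorCount (joinG (cycleGraph (a + 3)) (cycleGraph (b + 3))) f ≤ 5 := by
  have hl := cj_wt_l a b m t hm ha hb
  have hr := cj_wt_r a b m t hm ha hb
  refine ⟨cjF a b (cjLab a b m), ⟨cjF_bij a b _ (cjLab_inj a b m t hm ha hb)
    (cjLab_le a b m t hm ha hb), ?_⟩, ?_⟩
  · have hlr : ∀ (i : Fin (a + 3)) (j : Fin (b + 3)),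
        vertexWeight (joinG (cycleGraph (a + 3)) (cycleGraph (b + 3)))
          (cjF a b (cjLab a b m)) (Sum.inl i) ≠
        vertexWeight (joinG (cycleGraph (a + 3)) (cycleGraph (b + 3)))
          (cjF a b (cjLab a b m)) (Sum.inr j) := by
      intro i j h
      have h1 := hl i
      have h2 := hr j
      rw [h, h2] at h1
      refine cj_sep (a + 3) (b + 3) m ((a + 3) + (b + 3) + (b + 3) * m) _ _ hm ha
        (by omega) (by omega) rfl ?_ ?_ ?_ ?_
        (h1.symm.trans (add_assoc _ _ _)) <;> split_ifs <;> omega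
    rintro (x | x) (y | y) hxy h
    · rw [cj_adj_ll, cj_cycle_adj] at hxy
      have hp : ((x : ℕ) % 2 = 0 ∧ (y : ℕ) % 2 = 1) ∨ ((x : ℕ) % 2 = 1 ∧ (y : ℕ) % 2 = 0) := by
        have hx := cj_pred a x
        have hy := cj_pred a y
        have hx2 := x.2
        have hy2 := y.2
        rcases hxy with hxy | hxy
        · rw [show y - 1 = x by rw [hxy, add_sub_cancel_right]] at hy
          clear hx hxy
          split_ifs at hy <;> omega
        · rw [show x - 1 = y by rw [hxy, add_sub_cancel_right]] at hx
          clear hy hxy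
          split_ifs at hx <;> omega
      have h1 := hl x
      have h2 := hl y
      rw [h, h2] at h1
      rcases hp with ⟨p1, p2⟩ | ⟨p1, p2⟩
      · rw [if_neg (by omega), if_pos p1] at h1
        omega
      · rw [if_pos p2, if_neg (by omega)] at h1
        omega
    · exact hlr x y h
    · exact hlr y x h.symm
    · rw [cj_adj_rr, cj_cycle_adj] at hxy
      have h1 := hr x
      have h2 := hr y
      rw [h, h2] at h1
      have hx := cj_pred b x
      have hy := cj_pred b y
      have hx2 := x.2
      have hy2 := y.2
      rcases hxy with rfl | rfl
      · rw [add_sub_cancel_right] at hy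
        split_ifs at hy h1 <;> omega
      · rw [add_sub_cancel_right] at hx
        split_ifs at hx h1 <;> omega
  · unfold colorCount
    set P : ℤ := (((b + 3) * ((a + 3) + (b + 3) + (b + 3) * m) : ℕ) : ℤ) with hP
    set Q : ℤ := (((a + 3) * ((a + 3) + (b + 3) + (b + 3) * m) : ℕ) : ℤ) + 5 * m with hQ
    rw [← Finset.card_image_of_injective _ (Nat.cast_injective (R := ℤ))]
    have hsub : (Finset.univ.image (vertexWeight
        (joinG (cycleGraph (a + 3)) (cycleGraph (b + 3))) (cjF a b (cjLab a b m)))).image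
          (Nat.cast : ℕ → ℤ) ⊆
        {P + (5 * (m : ℤ) + 2 * ((m / 2 : ℕ) : ℤ) + 3),
          P + (2 * ((t : ℤ) + 1) - (m + 2 * ((m / 2 : ℕ) : ℤ))),
          Q + ((t : ℤ) + 3), Q + (2 * (t : ℤ) + 4), Q + (2 * (t : ℤ) + 5)} := by
      intro v hv
      obtain ⟨u, hu, rfl⟩ := Finset.mem_image.1 hv
      obtain ⟨x, -, rfl⟩ := Finset.mem_image.1 hu
      simp only [Finset.mem_insert, Finset.mem_singleton]
      rcases x with x | x
      · rw [hl x]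
        split_ifs <;> simp
      · rw [hr x]
        split_ifs <;> simp
    exact (Finset.card_le_card hsub).trans Finset.card_le_five

/-- Theorem: For all integers `m, n ≥ 2`, `χ_la(C_{2m} ∨ C_{2n−1}) = 5`. -/
theorem chiLA_evenCycle_join_oddCycle (m n : ℕ) (hm : 2 ≤ m) (hn : 2 ≤ n) :
    chiLA (joinG (cycleGraph (2 * m)) (cycleGraph (2 * n - 1))) = 5 := by
  obtain ⟨a, ha⟩ : ∃ a, 2 * m = a + 3 := ⟨2 * m - 3, by omega⟩
  obtain ⟨b, hb⟩ : ∃ b, 2 * n - 1 = b + 3 := ⟨2 * n - 1 - 3, by omega⟩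
  have hodd : Odd (b + 3) := ⟨n - 1, by omega⟩
  obtain ⟨f, hf, hf5⟩ := cj_exists a b m (n - 2) hm ha.symm (by omega)
  rw [ha, hb]
  have h5 := cj_lower a b hodd f hf
  unfold chiLA
  apply le_antisymm
  · exact Nat.sInf_le ⟨f, hf, le_antisymm hf5 h5⟩
  · refine le_csInf ⟨_, f, hf, rfl⟩ ?_
    rintro c ⟨g, hg, rfl⟩
    exact cj_lower a b hodd g hg
end
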